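/- The real algebra generated by two elements a, b with relations ba = a⁻¹b and b² = -1, acting on V = ℝ[t]/(p) ⊕ b·ℝ[t]/(p) with p = (t-c)(t-c̄), cc̄ = 1, c = e + if, f ≠ 0 (a acting as multiplication by t on the first summand), contains the anticommuting pair {b, J} with J = f⁻¹(a - e), J² = -1, b² = -1, bJ = -Jb; hence this representation makes V a module over the quaternion algebra ℍ, and V is isomorphic to ℍ as an ℍ-module (it is 4-dimensional over ℝ with basis {1, J, b·1, bJ}). -/

import Mathlib

open Polynomial

/-- `ℝ[t]/(p)` for `p = t² - 2et + 1` (i.e. `p = (t-c)(t-c̄)` with `c = e+if`,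
`cc̄ = 1`). -/
noncomputable abbrev QuotP (e : ℝ) :=
  ℝ[X] ⧸ Ideal.span ({(X ^ 2 - C (2 * e) * X + 1 : ℝ[X])} : Set ℝ[X])

/-- The class of `t`. -/
noncomputable def tbar (e : ℝ) : QuotP e :=
  Ideal.Quotient.mk _ (X : ℝ[X])

/-- `a` acts by multiplication by `t` on the first summand and by
`t⁻¹ = 2e - t` on the second. -/
noncomputable def aEnd (e : ℝ) : Module.End ℝ (QuotP e × QuotP e) :=
  (LinearMap.mulLeft ℝ (tbar e)).prodMap
    (LinearMap.mulLeft ℝ (algebraMap ℝ (QuotP e) (2 * e) - tbar e))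

/-- `b (u, v) = (-v, u)`. -/
noncomputable def bEnd (e : ℝ) : Module.End ℝ (QuotP e × QuotP e) :=
  LinearMap.prod (-(LinearMap.snd ℝ (QuotP e) (QuotP e))) (LinearMap.fst ℝ (QuotP e) (QuotP e))

/-- `J = f⁻¹ (a - e)`. -/
noncomputable def JEnd (e f : ℝ) : Module.End ℝ (QuotP e × QuotP e) :=
  f⁻¹ • (aEnd e - e • 1)

/-- The quaternion `i`. -/
noncomputable def qI : Quaternion ℝ := ⟨0, 1, 0, 0⟩

/-- The quaternion `j`. -/
noncomputable def qJ : Quaternion ℝ := ⟨0, 0, 1, 0⟩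

/-!
In `End V`, `a` is a root of `p = (t - e)² + f²` with conjugate root `a⁻¹ = 2e - a`, so
`J = f⁻¹(a - e)` is a square root of `-1`; the relation `ba = a⁻¹b` says that `b` exchanges `a` with
its conjugate, hence anticommutes with `J`. The pair `(J, b)` therefore defines
an action of `ℍ` on `V`. As `ℍ` is a division ring, the orbit map `q ↦ q • v` of any `v ≠ 0` is
injective, and as `dim V = 4 = dim ℍ` it is an isomorphism `ℍ ≃ V` carrying `1, i, j, k` to
`v, Jv, bv, Jbv`.
-/

open scoped Quaternion

section InvSmulSub

variable {A : Type*} [Ring A] {a b : A}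

theorem inv_smul_sub_mul_self_eq_neg_one {K : Type*} [Field K] [Algebra K A] {e f : K} (hf : f ≠ 0)
    (ha : a * ((2 * e) • 1 - a) = (e ^ 2 + f ^ 2) • (1 : A)) :
    (f⁻¹ • (a - e • 1)) * (f⁻¹ • (a - e • 1)) = -1 := by
  have complete_square : (a - e • 1) * (a - e • 1) = -(f ^ 2) • (1 : A) := by
    simp only [mul_sub, sub_mul, mul_smul_comm, smul_mul_assoc, mul_one, one_mul] at ha ⊢
    linear_combination (norm := module) -ha
  have normalize : f⁻¹ * f⁻¹ * -f ^ 2 = -1 := by field_simp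
  rw [smul_mul_smul_comm, complete_square, smul_smul, normalize, neg_one_smul]

theorem mul_smul_sub_eq_neg_smul_sub_mul {R : Type*} [CommRing R] [Algebra R A] {e : R}
    (hab : b * a = ((2 * e) • 1 - a) * b) (s : R) :
    b * (s • (a - e • 1)) = -((s • (a - e • 1)) * b) := by
  simp only [mul_smul_comm, smul_mul_assoc, mul_sub, sub_mul, mul_one, one_mul] at hab ⊢
  linear_combination (norm := module) s • hab

end InvSmulSub

section Orbit

/-- The orbit map `d ↦ d • v` of a vector `v`, where the algebra `D` acts on `V` through `ρ`. -/
def orbitMap {R D V : Type*} [CommSemiring R] [Semiring D] [Algebra R D] [AddCommMonoid V]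
    [Module R V] (ρ : D →ₐ[R] Module.End R V) (v : V) : D →ₗ[R] V :=
  LinearMap.applyₗ v ∘ₗ ρ.toLinearMap

theorem orbitMap_injective {R D V : Type*} [CommSemiring R] [DivisionRing D] [Algebra R D]
    [AddCommGroup V] [Module R V] (ρ : D →ₐ[R] Module.End R V) {v : V} (hv : v ≠ 0) :
    Function.Injective (orbitMap ρ v) := by
  refine (injective_iff_map_eq_zero _).mpr fun d (hd : ρ d v = 0) => by_contra fun hd₀ => hv ?_
  calc v = ρ (d⁻¹ * d) v := by rw [inv_mul_cancel₀ hd₀, map_one, Module.End.one_apply]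
    _ = ρ d⁻¹ (ρ d v) := by rw [map_mul, Module.End.mul_apply]
    _ = 0 := by rw [hd, map_zero]

variable {K D V : Type*} [Field K] [DivisionRing D] [Algebra K D] [FiniteDimensional K D]
  [AddCommGroup V] [Module K V] (ρ : D →ₐ[K] Module.End K V) {v : V} (hv : v ≠ 0)
  (hdim : Module.finrank K D = Module.finrank K V)

/-- The orbit map of a nonzero vector as an isomorphism from `D` onto a representation `V` of the
same dimension. -/
noncomputable def orbitEquiv : D ≃ₗ[K] V :=
  have : FiniteDimensional K V := Module.finite_of_finrank_pos (hdim ▸ Module.finrank_pos)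
  (orbitMap ρ v).linearEquivOfInjective (orbitMap_injective ρ hv) hdim

theorem orbitEquiv_apply (d : D) : orbitEquiv ρ hv hdim d = ρ d v := rfl

theorem orbitEquiv_symm_map_apply (d : D) (w : V) :
    (orbitEquiv ρ hv hdim).symm (ρ d w) = d * (orbitEquiv ρ hv hdim).symm w := by
  obtain ⟨x, rfl⟩ := (orbitEquiv ρ hv hdim).surjective w
  rw [LinearEquiv.symm_apply_apply, LinearEquiv.symm_apply_eq, orbitEquiv_apply,
    orbitEquiv_apply, map_mul, Module.End.mul_apply]

end Orbit

section Quaternion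

/-- The basis `1, i, j, k` of `ℍ[R]`: Mathlib's basis of a general quaternion algebra, retyped so
that it carries the instances of `ℍ[R]`. -/
noncomputable def quaternionBasis (R : Type*) [CommRing R] : Module.Basis (Fin 4) R ℍ[R] :=
  QuaternionAlgebra.basisOneIJK (-1) 0 (-1)

theorem coe_quaternionBasis (R : Type*) [CommRing R] :
    ⇑(quaternionBasis R) = ![1, ⟨0, 1, 0, 0⟩, ⟨0, 0, 1, 0⟩, ⟨0, 0, 0, 1⟩] := by
  have repr_eq (q : ℍ[R]) : (quaternionBasis R).repr q = ![q.re, q.imI, q.imJ, q.imK] := rfl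
  funext n
  apply (quaternionBasis R).repr.injective
  rw [Module.Basis.repr_self]
  refine DFunLike.coe_injective ?_
  rw [repr_eq]
  ext m
  fin_cases n <;> fin_cases m <;> simp

variable {R A : Type*} [CommRing R] [Ring A] [Algebra R A] {I J : A}

/-- The algebra homomorphism out of the quaternions determined by an anticommuting pair `I`, `J` of
square roots of `-1`, with `i ↦ I` and `j ↦ J`. -/
def quaternionLift (hI : I * I = -1) (hJ : J * J = -1) (hJI : J * I = -(I * J)) : ℍ[R] →ₐ[R] A :=
  QuaternionAlgebra.Basis.liftHom
    { i := I
      j := J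
      k := I * J
      i_mul_i := by rw [hI, neg_one_smul, zero_smul, add_zero]
      j_mul_j := by rw [hJ, neg_one_smul]
      i_mul_j := rfl
      j_mul_i := by rw [hJI, zero_smul, zero_sub] }

variable (hI : I * I = -1) (hJ : J * J = -1) (hJI : J * I = -(I * J))

theorem quaternionLift_i : quaternionLift hI hJ hJI (⟨0, 1, 0, 0⟩ : ℍ[R]) = I := by
  change algebraMap R A 0 + (1 : R) • I + (0 : R) • J + (0 : R) • (I * J) = I
  simp

theorem quaternionLift_j : quaternionLift hI hJ hJI (⟨0, 0, 1, 0⟩ : ℍ[R]) = J := by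
  change algebraMap R A 0 + (0 : R) • I + (1 : R) • J + (0 : R) • (I * J) = J
  simp

theorem quaternionLift_k : quaternionLift hI hJ hJI (⟨0, 0, 0, 1⟩ : ℍ[R]) = I * J := by
  change algebraMap R A 0 + (0 : R) • I + (0 : R) • J + (1 : R) • (I * J) = I * J
  simp

end Quaternion

section Representation

variable (e : ℝ) {f : ℝ}

theorem tbar_mul_two_mul_sub_tbar :
    tbar e * (algebraMap ℝ (QuotP e) (2 * e) - tbar e) = 1 := by
  have hroot : tbar e ^ 2 - algebraMap ℝ (QuotP e) (2 * e) * tbar e + 1 = 0 :=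
    Ideal.Quotient.eq_zero_iff_mem.mpr (Ideal.mem_span_singleton_self _)
  linear_combination -hroot

theorem aEnd_apply (v : QuotP e × QuotP e) :
    aEnd e v = (tbar e * v.1, (algebraMap ℝ (QuotP e) (2 * e) - tbar e) * v.2) := rfl

theorem bEnd_apply (v : QuotP e × QuotP e) : bEnd e v = (-v.2, v.1) := rfl

theorem two_mul_sub_aEnd_apply (v : QuotP e × QuotP e) :
    ((2 * e) • 1 - aEnd e) v =
      ((algebraMap ℝ (QuotP e) (2 * e) - tbar e) * v.1, tbar e * v.2) := by
  have smul_eq (x : QuotP e) : (2 * e) • x = algebraMap ℝ (QuotP e) (2 * e) * x :=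
    Algebra.smul_def (2 * e) x
  refine Prod.ext ?_ ?_
  · calc (2 * e) • v.1 - tbar e * v.1
      _ = (algebraMap ℝ (QuotP e) (2 * e) - tbar e) * v.1 := by rw [smul_eq, sub_mul]
  · calc (2 * e) • v.2 - (algebraMap ℝ (QuotP e) (2 * e) - tbar e) * v.2
      _ = tbar e * v.2 := by rw [smul_eq, ← sub_mul, sub_sub_cancel]

theorem aEnd_mul_two_mul_sub_aEnd : aEnd e * ((2 * e) • 1 - aEnd e) = 1 := by
  have ht := tbar_mul_two_mul_sub_tbar e
  refine LinearMap.ext fun v => ?_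
  rw [Module.End.mul_apply, two_mul_sub_aEnd_apply, aEnd_apply, Module.End.one_apply,
    ← mul_assoc, ← mul_assoc, mul_comm _ (tbar e), ht, one_mul, one_mul]

theorem bEnd_mul_self : bEnd e * bEnd e = -1 := rfl

theorem bEnd_mul_aEnd : bEnd e * aEnd e = ((2 * e) • 1 - aEnd e) * bEnd e := by
  refine LinearMap.ext fun v => ?_
  simp only [Module.End.mul_apply, two_mul_sub_aEnd_apply, aEnd_apply, bEnd_apply]
  exact Prod.ext (neg_mul_eq_mul_neg (algebraMap ℝ (QuotP e) (2 * e) - tbar e) v.2) rfl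

theorem bEnd_mul_JEnd (f : ℝ) : bEnd e * JEnd e f = -(JEnd e f * bEnd e) :=
  mul_smul_sub_eq_neg_smul_sub_mul (bEnd_mul_aEnd e) f⁻¹

theorem finrank_quotP : Module.finrank ℝ (QuotP e) = 2 := by
  rw [finrank_quotient_span_eq_natDegree]
  compute_degree!

theorem finrank_quotP_prod : Module.finrank ℝ (QuotP e × QuotP e) = 4 := by
  have : FiniteDimensional ℝ (QuotP e) :=
    Module.finite_of_finrank_eq_succ (finrank_quotP e)
  rw [Module.finrank_prod, finrank_quotP]

theorem quotP_prod_one_zero_ne_zero : ((1, 0) : QuotP e × QuotP e) ≠ 0 := by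
  have : Nontrivial (QuotP e) := Module.nontrivial_of_finrank_eq_succ (finrank_quotP e)
  exact fun h => one_ne_zero (congrArg Prod.fst h)

variable {e} (hf : f ≠ 0) (hef : e ^ 2 + f ^ 2 = 1)
include hf hef

theorem JEnd_mul_self : JEnd e f * JEnd e f = -1 :=
  inv_smul_sub_mul_self_eq_neg_one hf (by rw [aEnd_mul_two_mul_sub_aEnd, hef, one_smul])

/-- The action of `ℍ` on `V` with `i` acting as `J` and `j` as `b`. -/
noncomputable def quaternionAction : ℍ[ℝ] →ₐ[ℝ] Module.End ℝ (QuotP e × QuotP e) :=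
  quaternionLift (JEnd_mul_self hf hef) (bEnd_mul_self e) (bEnd_mul_JEnd e f)

theorem quaternionAction_qI : quaternionAction hf hef qI = JEnd e f :=
  quaternionLift_i _ _ _

theorem quaternionAction_qJ : quaternionAction hf hef qJ = bEnd e :=
  quaternionLift_j _ _ _

theorem quaternionAction_k : quaternionAction hf hef ⟨0, 0, 0, 1⟩ = JEnd e f * bEnd e :=
  quaternionLift_k _ _ _

/-- The isomorphism `q ↦ q • (1, 0)` of `ℍ`-modules from `ℍ` onto `V`. -/
noncomputable def quaternionEquiv : ℍ[ℝ] ≃ₗ[ℝ] QuotP e × QuotP e :=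
  orbitEquiv (quaternionAction hf hef) (quotP_prod_one_zero_ne_zero e)
    (Quaternion.finrank_eq_four.trans (finrank_quotP_prod e).symm)

theorem quaternionEquiv_apply (q : ℍ[ℝ]) :
    quaternionEquiv hf hef q = quaternionAction hf hef q (1, 0) := rfl

theorem quaternionEquiv_symm_JEnd (v : QuotP e × QuotP e) :
    (quaternionEquiv hf hef).symm (JEnd e f v) = qI * (quaternionEquiv hf hef).symm v := by
  rw [← quaternionAction_qI hf hef]
  exact orbitEquiv_symm_map_apply _ _ _ _ _

theorem quaternionEquiv_symm_bEnd (v : QuotP e × QuotP e) :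
    (quaternionEquiv hf hef).symm (bEnd e v) = qJ * (quaternionEquiv hf hef).symm v := by
  rw [← quaternionAction_qJ hf hef]
  exact orbitEquiv_symm_map_apply _ _ _ _ _

/-- The basis of `V` corresponding to the basis `1, i, j, k` of `ℍ`. -/
noncomputable def quaternionOrbitBasis : Module.Basis (Fin 4) ℝ (QuotP e × QuotP e) :=
  (quaternionBasis ℝ).map (quaternionEquiv hf hef)

theorem coe_quaternionOrbitBasis :
    ⇑(quaternionOrbitBasis hf hef) =
      ![(1, 0), JEnd e f (1, 0), bEnd e (1, 0), JEnd e f (bEnd e (1, 0))] := by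
  funext n
  rw [quaternionOrbitBasis, Module.Basis.map_apply, coe_quaternionBasis, quaternionEquiv_apply]
  fin_cases n
  · exact LinearMap.congr_fun (map_one (quaternionAction hf hef)) _
  · exact LinearMap.congr_fun (quaternionAction_qI hf hef) _
  · exact LinearMap.congr_fun (quaternionAction_qJ hf hef) _
  · exact LinearMap.congr_fun (quaternionAction_k hf hef) _

end Representation

/-- On `V = ℝ[t]/(p) ⊕ b·ℝ[t]/(p)` with `p = (t-c)(t-c̄)`, `cc̄ = 1`,
`c = e + if`, `f ≠ 0`: the pair `{b, J}` with `J = f⁻¹(a - e)` anticommutes and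
satisfies `J² = b² = -1`, so `V` is a quaternion module; moreover `V` is
4-dimensional over `ℝ` with basis `{1, J·1, b·1, J(b·1)}` and is isomorphic to
`ℍ` as an `ℍ`-module. -/
theorem stmt10 (e f : ℝ) (hf : f ≠ 0) (hef : e ^ 2 + f ^ 2 = 1) :
    JEnd e f * JEnd e f = -1 ∧
    bEnd e * bEnd e = -1 ∧
    bEnd e * JEnd e f = -(JEnd e f * bEnd e) ∧
    (LinearIndependent ℝ
        ![((1 : QuotP e), (0 : QuotP e)), JEnd e f (1, 0), bEnd e (1, 0),
          JEnd e f (bEnd e (1, 0))] ∧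
      Submodule.span ℝ
        {((1 : QuotP e), (0 : QuotP e)), JEnd e f (1, 0), bEnd e (1, 0),
          JEnd e f (bEnd e (1, 0))} = ⊤) ∧
    Module.finrank ℝ (QuotP e × QuotP e) = 4 ∧
    ∃ φ : (QuotP e × QuotP e) ≃ₗ[ℝ] Quaternion ℝ,
      (∀ v, φ (JEnd e f v) = qI * φ v) ∧
      (∀ v, φ (bEnd e v) = qJ * φ v) := by
  have hbasis := coe_quaternionOrbitBasis hf hef
  have hspan := (quaternionOrbitBasis hf hef).span_eq
  refine ⟨JEnd_mul_self hf hef, bEnd_mul_self e, bEnd_mul_JEnd e f,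
    ⟨hbasis ▸ (quaternionOrbitBasis hf hef).linearIndependent, ?_⟩, finrank_quotP_prod e,
    (quaternionEquiv hf hef).symm, quaternionEquiv_symm_JEnd hf hef,
    quaternionEquiv_symm_bEnd hf hef⟩
  simpa only [hbasis, Matrix.range_cons, Matrix.range_empty, Set.union_empty,
    Set.singleton_union] using hspan
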